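/- Fix K ∈ ℕ, Δ > 0, ε₁ > 0, ε₂ > 0, and a real α > 1. Let the threshold noise density be p₁(z) = (ε₁/(2Δ)) exp(−ε₁|z|/Δ) (Laplace with scale Δ/ε₁) and the query noise density be p₂(y) = (ε₂/(2Δ)) exp(−ε₂|y|/Δ) (Laplace with scale Δ/ε₂), with CDF Φ₂(t) = ∫_{−∞}^t p₂(u) du. For a query vector a ∈ ℝ^K define P_k(a) = ∫_ℝ (∏_{i=1}^{k−1} Φ₂(z − a_i)) (1 − Φ₂(z − a_k)) p₁(z) dz. Then for any a, b ∈ ℝ^K with |a_i − b_i| ≤ Δ for all i, and for every k ∈ {1, …, K}: P_k(a)^α · P_k(b)^{1−α} ≤ [ (α/(2α−1)) e^{ε₁(α−1)} + ((α−1)/(2α−1)) e^{−ε₁α} ] · [ (α/(2α−1)) e^{2ε₂(α−1)} + ((α−1)/(2α−1)) e^{−2ε₂α} ]. Equivalently, (1/(α−1)) log( P_k(a)^α P_k(b)^{1−α} ) is at most the Rényi privacy budget ε(α, ε₁, ε₂) of Equation (4) of the paper. -/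

import Mathlib

open MeasureTheory Real

/-! Hölder's inequality says that a pointwise bound `f ^ α ≤ r * g ^ (α - 1)` integrates to
`(∫ f) ^ α ≤ (∫ r) * (∫ g) ^ (α - 1)`. Applied to a translate `f` of a density `g` on a half-line,
with the Rényi integrand as `r`, it bounds the tail of the query noise after a shift by `2Δ`. In the
integral over the threshold, substitute `z ↦ z - Δ`. Every factor `Φ₂ (z - Δ - a i)` is then at most
`Φ₂ (z - b i)`, while the tail of the selected query moves by at most `2Δ` and the threshold noise
by `Δ`. A second application of the inequality, to the integral over the threshold, multiplies the
costs of these two shifts. -/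

section Holder

theorem rpow_le_mul_rpow_sub_one_iff {x y C α : ℝ} (hα : 0 < α) (hx : 0 ≤ x) (hy : 0 ≤ y)
    (hC : 0 ≤ C) : x ^ α ≤ C * y ^ (α - 1) ↔ x ≤ C ^ α⁻¹ * y ^ (1 - α⁻¹) := by
  rw [← le_rpow_inv_iff_of_pos hx (by positivity) hα, mul_rpow hC (by positivity),
    ← rpow_mul hy, sub_mul, mul_inv_cancel₀ hα.ne', one_mul]

theorem rpow_mul_rpow_one_sub_le {x y C α : ℝ} (hy : 0 ≤ y) (hC : 0 ≤ C)
    (h : x ^ α ≤ C * y ^ (α - 1)) : x ^ α * y ^ (1 - α) ≤ C := by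
  rw [← neg_sub α 1, rpow_neg hy, ← div_eq_mul_inv]
  exact div_le_of_le_mul₀ (by positivity) hC h

variable {X : Type*} [MeasurableSpace X] {μ : Measure X} {f g r : X → ℝ}

theorem integral_le_rpow_mul_rpow_of_le {s t : ℝ} (hs : 0 ≤ s) (ht : 0 ≤ t) (hst : s + t = 1)
    (hf : 0 ≤ f) (hr : 0 ≤ r) (hg : 0 ≤ g) (hri : Integrable r μ) (hgi : Integrable g μ)
    (h : ∀ x, f x ≤ r x ^ s * g x ^ t) :
    ∫ x, f x ∂μ ≤ (∫ x, r x ∂μ) ^ s * (∫ x, g x ∂μ) ^ t := by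
  have hR : 0 ≤ ∫ x, r x ∂μ := integral_nonneg hr
  have hG : 0 ≤ ∫ x, g x ∂μ := integral_nonneg hg
  have hpow (x : X) : ENNReal.ofReal (r x ^ s * g x ^ t) =
      ENNReal.ofReal (r x) ^ s * ENNReal.ofReal (g x) ^ t := by
    rw [ENNReal.ofReal_mul (rpow_nonneg (hr x) s), ENNReal.ofReal_rpow_of_nonneg (hr x) hs,
      ENNReal.ofReal_rpow_of_nonneg (hg x) ht]
  rw [← ENNReal.ofReal_le_ofReal_iff (by positivity)]
  calc ENNReal.ofReal (∫ x, f x ∂μ)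
      ≤ ∫⁻ x, ENNReal.ofReal (f x) ∂μ := by
        simpa only [← enorm_of_nonneg (integral_nonneg hf), ← enorm_of_nonneg (hf _)]
          using enorm_integral_le_lintegral_enorm f
    _ ≤ ∫⁻ x, ENNReal.ofReal (r x) ^ s * ENNReal.ofReal (g x) ^ t ∂μ :=
        lintegral_mono fun x => (ENNReal.ofReal_le_ofReal (h x)).trans_eq (hpow x)
    _ ≤ (∫⁻ x, ENNReal.ofReal (r x) ∂μ) ^ s * (∫⁻ x, ENNReal.ofReal (g x) ∂μ) ^ t :=
        ENNReal.lintegral_mul_norm_pow_le hri.aemeasurable.ennreal_ofReal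
          hgi.aemeasurable.ennreal_ofReal hs ht hst
    _ = ENNReal.ofReal ((∫ x, r x ∂μ) ^ s * (∫ x, g x ∂μ) ^ t) := by
        rw [← ofReal_integral_eq_lintegral_ofReal hri (.of_forall hr),
          ← ofReal_integral_eq_lintegral_ofReal hgi (.of_forall hg),
          ENNReal.ofReal_mul (by positivity), ENNReal.ofReal_rpow_of_nonneg hR hs,
          ENNReal.ofReal_rpow_of_nonneg hG ht]

theorem rpow_integral_le_of_rpow_le {α : ℝ} (hα : 1 ≤ α) (hf : 0 ≤ f) (hr : 0 ≤ r) (hg : 0 ≤ g)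
    (hri : Integrable r μ) (hgi : Integrable g μ) (h : ∀ x, f x ^ α ≤ r x * g x ^ (α - 1)) :
    (∫ x, f x ∂μ) ^ α ≤ (∫ x, r x ∂μ) * (∫ x, g x ∂μ) ^ (α - 1) := by
  have hα₀ : 0 < α := zero_lt_one.trans_le hα
  rw [rpow_le_mul_rpow_sub_one_iff hα₀ (integral_nonneg hf) (integral_nonneg hg)
    (integral_nonneg hr)]
  exact integral_le_rpow_mul_rpow_of_le (by positivity) (sub_nonneg.2 (inv_le_one_of_one_le₀ hα))
    (add_sub_cancel _ _) hf hr hg hri hgi fun x =>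
      (rpow_le_mul_rpow_sub_one_iff hα₀ (hf x) (hg x) (hr x)).1 (h x)

end Holder

section ShiftRenyi

/-- The Rényi integrand of order `α` between the translate `z ↦ p (z - c)` of a density `p` on the
line and `p` itself. Its integral is `exp ((α - 1) * D)`, where `D` is the Rényi divergence of order
`α` of the translate from `p`. -/
noncomputable def shiftRenyiIntegrand (α : ℝ) (p : ℝ → ℝ) (c z : ℝ) : ℝ :=
  p (z - c) ^ α * p z ^ (1 - α)

/-- Finiteness of the Rényi divergence of order `α` of the translate `z ↦ p (z - c)` from the
density `p`, which includes absolute continuity: the translate vanishes wherever `p` does. The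
density need not be normalised. -/
structure HasFiniteShiftRenyi (α : ℝ) (p : ℝ → ℝ) (c : ℝ) : Prop where
  nonneg : 0 ≤ p
  integrable : Integrable p
  shift_eq_zero : ∀ z, p z = 0 → p (z - c) = 0
  integrable_integrand : Integrable (shiftRenyiIntegrand α p c)

/-- The cumulative distribution function of the distribution on the line with density `p`. -/
noncomputable def cdfOfDensity (p : ℝ → ℝ) (t : ℝ) : ℝ := ∫ u in Set.Iic t, p u

variable {α c : ℝ} {p : ℝ → ℝ}

theorem shiftRenyiIntegrand_nonneg (hp : 0 ≤ p) : 0 ≤ shiftRenyiIntegrand α p c := fun z =>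
  mul_nonneg (rpow_nonneg (hp (z - c)) α) (rpow_nonneg (hp z) (1 - α))

theorem shiftRenyiIntegrand_one_zero : shiftRenyiIntegrand 1 p 0 = p := by
  funext z
  simp [shiftRenyiIntegrand]

theorem HasFiniteShiftRenyi.rpow_shift_eq (h : HasFiniteShiftRenyi α p c) (hα : α ≠ 0) (z : ℝ) :
    p (z - c) ^ α = shiftRenyiIntegrand α p c z * p z ^ (α - 1) := by
  rcases (h.nonneg z).eq_or_lt' with hz | hz
  · simp [shiftRenyiIntegrand, h.shift_eq_zero z hz, zero_rpow hα]
  · rw [shiftRenyiIntegrand, mul_assoc, ← rpow_add hz, sub_add_sub_cancel, sub_self, rpow_zero,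
      mul_one]

theorem HasFiniteShiftRenyi.rpow_integral_mul_le (h : HasFiniteShiftRenyi α p c) (hα : 1 ≤ α)
    {C : ℝ} (hC : 0 ≤ C) {u v : ℝ → ℝ} (hu : 0 ≤ u) (hv : 0 ≤ v)
    (hvi : Integrable fun z => v z * p z) (huv : ∀ z, u (z - c) ^ α ≤ C * v z ^ (α - 1)) :
    (∫ z, u z * p z) ^ α ≤
      (∫ z, shiftRenyiIntegrand α p c z) * C * (∫ z, v z * p z) ^ (α - 1) := by
  have hk : 0 ≤ shiftRenyiIntegrand α p c := shiftRenyiIntegrand_nonneg h.nonneg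
  have hpointwise (z : ℝ) : (u (z - c) * p (z - c)) ^ α ≤
      shiftRenyiIntegrand α p c z * C * (v z * p z) ^ (α - 1) :=
    calc (u (z - c) * p (z - c)) ^ α
        = u (z - c) ^ α * (shiftRenyiIntegrand α p c z * p z ^ (α - 1)) := by
          rw [mul_rpow (hu _) (h.nonneg _), h.rpow_shift_eq (by positivity)]
      _ ≤ C * v z ^ (α - 1) * (shiftRenyiIntegrand α p c z * p z ^ (α - 1)) :=
          mul_le_mul_of_nonneg_right (huv z) (mul_nonneg (hk z) (rpow_nonneg (h.nonneg z) _))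
      _ = shiftRenyiIntegrand α p c z * C * (v z * p z) ^ (α - 1) := by
          rw [mul_rpow (hv z) (h.nonneg z)]
          ring
  rw [← integral_sub_right_eq_self (fun z => u z * p z) c, ← integral_mul_const]
  exact rpow_integral_le_of_rpow_le hα (fun z => mul_nonneg (hu _) (h.nonneg _))
    (fun z => mul_nonneg (hk z) hC) (fun z => mul_nonneg (hv z) (h.nonneg z))
    (h.integrable_integrand.mul_const C) hvi hpointwise

theorem HasFiniteShiftRenyi.rpow_integral_Ioi_sub_le (h : HasFiniteShiftRenyi α p c) (hα : 1 ≤ α)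
    (t : ℝ) :
    (∫ z in Set.Ioi (t - c), p z) ^ α ≤
      (∫ z, shiftRenyiIntegrand α p c z) * (∫ z in Set.Ioi t, p z) ^ (α - 1) := by
  have hmul (s : ℝ) : (fun z => (Set.Ioi s).indicator 1 z * p z) = (Set.Ioi s).indicator p := by
    simp only [← Set.indicator_mul_left, Pi.one_apply, one_mul]
  have hind (s : ℝ) : (0 : ℝ → ℝ) ≤ (Set.Ioi s).indicator 1 :=
    Set.indicator_nonneg fun _ _ => zero_le_one
  have hshift (z : ℝ) : (Set.Ioi (t - c)).indicator (1 : ℝ → ℝ) (z - c) ^ α ≤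
      1 * (Set.Ioi t).indicator 1 z ^ (α - 1) := by
    by_cases hz : t < z
    · simp [hz]
    · simp [hz, zero_rpow (show α ≠ 0 by positivity), zero_rpow_nonneg]
  have hint : Integrable fun z => (Set.Ioi t).indicator 1 z * p z := by
    simpa only [hmul] using h.integrable.indicator measurableSet_Ioi
  simpa only [hmul, integral_indicator measurableSet_Ioi, mul_one] using
    h.rpow_integral_mul_le hα zero_le_one (hind (t - c)) (hind t) hint hshift

theorem cdfOfDensity_monotone (hp : 0 ≤ p) (hi : Integrable p) : Monotone (cdfOfDensity p) :=
  fun _ _ hst => setIntegral_mono_set hi.integrableOn (.of_forall hp)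
    (Set.Iic_subset_Iic.2 hst).eventuallyLE

theorem one_sub_cdfOfDensity (hp_one : ∫ u, p u = 1) (t : ℝ) :
    1 - cdfOfDensity p t = ∫ u in Set.Ioi t, p u := by
  rw [cdfOfDensity, ← hp_one, ← setIntegral_compl measurableSet_Iic
    (integrable_of_integral_eq_one hp_one), Set.compl_Iic]

theorem cdfOfDensity_mem_Icc (hp : 0 ≤ p) (hp_one : ∫ u, p u = 1) (t : ℝ) :
    cdfOfDensity p t ∈ Set.Icc 0 1 := by
  refine ⟨integral_nonneg hp, sub_nonneg.1 ?_⟩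
  rw [one_sub_cdfOfDensity hp_one]
  exact integral_nonneg hp

end ShiftRenyi

section AboveThreshold

variable {ι : Type*} {s : Finset ι} {k : ι} {a b : ι → ℝ} {F : ℝ → ℝ} {α Δ : ℝ}

/-- The conditional probability, given the noisy threshold `z`, that AboveThreshold rejects the
queries indexed by `s` and selects `k`, when the query noise has distribution function `F`. The
output `k` of the mechanism corresponds to taking for `s` the indices preceding `k`. -/
noncomputable def aboveThresholdCondProb (F : ℝ → ℝ) (s : Finset ι) (k : ι) (a : ι → ℝ) (z : ℝ) :
    ℝ :=
  (∏ i ∈ s, F (z - a i)) * (1 - F (z - a k))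

/-- The probability that AboveThreshold, with threshold noise of density `p₁` and query noise of
density `p₂`, rejects the queries indexed by `s` and selects `k`. -/
noncomputable def aboveThresholdProb (p₁ p₂ : ℝ → ℝ) (s : Finset ι) (k : ι) (a : ι → ℝ) : ℝ :=
  ∫ z, aboveThresholdCondProb (cdfOfDensity p₂) s k a z * p₁ z

theorem prod_sub_mem_Icc (hF : ∀ t, F t ∈ Set.Icc 0 1) (z : ℝ) :
    ∏ i ∈ s, F (z - a i) ∈ Set.Icc 0 1 :=
  ⟨Finset.prod_nonneg fun _ _ => (hF _).1,
    Finset.prod_le_one (fun _ _ => (hF _).1) fun _ _ => (hF _).2⟩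

theorem aboveThresholdCondProb_mem_Icc (hF : ∀ t, F t ∈ Set.Icc 0 1) (z : ℝ) :
    aboveThresholdCondProb F s k a z ∈ Set.Icc 0 1 :=
  unitInterval.mul_mem (prod_sub_mem_Icc hF z) (Set.Icc.mem_iff_one_sub_mem.1 (hF _))

theorem measurable_aboveThresholdCondProb (hF : Monotone F) :
    Measurable (aboveThresholdCondProb F s k a) := by
  have hFm : Measurable F := hF.measurable
  have hprod : Measurable fun z => ∏ i ∈ s, F (z - a i) :=
    Finset.measurable_fun_prod s fun i _ => by fun_prop
  exact hprod.mul (by fun_prop)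

theorem integrable_aboveThresholdCondProb_mul (hFm : Monotone F) (hF : ∀ t, F t ∈ Set.Icc 0 1)
    {p : ℝ → ℝ} (hp : Integrable p) : Integrable fun z => aboveThresholdCondProb F s k a z * p z :=
  hp.bdd_mul (c := 1) (measurable_aboveThresholdCondProb hFm).aestronglyMeasurable
    (.of_forall fun z => by
      have h := aboveThresholdCondProb_mem_Icc (s := s) (k := k) (a := a) hF z
      rw [norm_of_nonneg h.1]
      exact h.2)

theorem rpow_aboveThresholdCondProb_sub_le {C : ℝ} (hα : 1 ≤ α) (hFm : Monotone F)
    (hF : ∀ t, F t ∈ Set.Icc 0 1)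
    (htail : ∀ t, (1 - F (t - 2 * Δ)) ^ α ≤ C * (1 - F t) ^ (α - 1))
    (hs : ∀ i ∈ s, b i ≤ a i + Δ) (hk : a k ≤ b k + Δ) (z : ℝ) :
    aboveThresholdCondProb F s k a (z - Δ) ^ α ≤
      C * aboveThresholdCondProb F s k b z ^ (α - 1) := by
  have ha := prod_sub_mem_Icc (s := s) (a := a) hF (z - Δ)
  have hb := prod_sub_mem_Icc (s := s) (a := b) hF z
  have hF₁ (t : ℝ) : 0 ≤ 1 - F t := sub_nonneg.2 (hF t).2
  have hrejected : (∏ i ∈ s, F (z - Δ - a i)) ^ α ≤ (∏ i ∈ s, F (z - b i)) ^ (α - 1) :=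
    calc (∏ i ∈ s, F (z - Δ - a i)) ^ α
        ≤ (∏ i ∈ s, F (z - Δ - a i)) ^ (α - 1) :=
          rpow_le_rpow_of_exponent_ge_of_imp ha.1 ha.2 (sub_le_self _ zero_le_one)
            fun _ h => by linarith
      _ ≤ (∏ i ∈ s, F (z - b i)) ^ (α - 1) := by
          refine rpow_le_rpow ha.1 (Finset.prod_le_prod (fun i _ => (hF _).1) fun i hi => hFm ?_)
            (sub_nonneg.2 hα)
          linarith [hs i hi]
  have hselected : (1 - F (z - Δ - a k)) ^ α ≤ C * (1 - F (z - b k)) ^ (α - 1) := by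
    refine (rpow_le_rpow (hF₁ _) (sub_le_sub_left (hFm ?_) 1) (by positivity)).trans (htail _)
    linarith
  calc aboveThresholdCondProb F s k a (z - Δ) ^ α
      = (∏ i ∈ s, F (z - Δ - a i)) ^ α * (1 - F (z - Δ - a k)) ^ α :=
        mul_rpow ha.1 (hF₁ _)
    _ ≤ (∏ i ∈ s, F (z - b i)) ^ (α - 1) * (C * (1 - F (z - b k)) ^ (α - 1)) :=
        mul_le_mul hrejected hselected (rpow_nonneg (hF₁ _) α) (rpow_nonneg hb.1 _)
    _ = C * aboveThresholdCondProb F s k b z ^ (α - 1) := by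
        rw [aboveThresholdCondProb, mul_rpow hb.1 (hF₁ _)]
        ring

variable {p₁ p₂ : ℝ → ℝ}

theorem aboveThresholdProb_nonneg (hp₁ : 0 ≤ p₁) (hp₂ : 0 ≤ p₂) (hp₂_one : ∫ y, p₂ y = 1) :
    0 ≤ aboveThresholdProb p₁ p₂ s k a :=
  integral_nonneg fun z => mul_nonneg
    (aboveThresholdCondProb_mem_Icc (cdfOfDensity_mem_Icc hp₂ hp₂_one) z).1 (hp₁ z)

theorem aboveThresholdProb_rpow_mul_rpow_le (hα : 1 ≤ α) (h₁ : HasFiniteShiftRenyi α p₁ Δ)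
    (h₂ : HasFiniteShiftRenyi α p₂ (2 * Δ)) (hp₂_one : ∫ y, p₂ y = 1)
    (hs : ∀ i ∈ s, b i ≤ a i + Δ) (hk : a k ≤ b k + Δ) :
    aboveThresholdProb p₁ p₂ s k a ^ α * aboveThresholdProb p₁ p₂ s k b ^ (1 - α) ≤
      (∫ z, shiftRenyiIntegrand α p₁ Δ z) * ∫ z, shiftRenyiIntegrand α p₂ (2 * Δ) z := by
  have hC₁ : 0 ≤ ∫ z, shiftRenyiIntegrand α p₁ Δ z :=
    integral_nonneg (shiftRenyiIntegrand_nonneg h₁.nonneg)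
  have hC₂ : 0 ≤ ∫ z, shiftRenyiIntegrand α p₂ (2 * Δ) z :=
    integral_nonneg (shiftRenyiIntegrand_nonneg h₂.nonneg)
  have hF := cdfOfDensity_mem_Icc h₂.nonneg hp₂_one
  have hFm := cdfOfDensity_monotone h₂.nonneg h₂.integrable
  have htail (t : ℝ) : (1 - cdfOfDensity p₂ (t - 2 * Δ)) ^ α ≤
      (∫ z, shiftRenyiIntegrand α p₂ (2 * Δ) z) * (1 - cdfOfDensity p₂ t) ^ (α - 1) := by
    simpa only [one_sub_cdfOfDensity hp₂_one] using h₂.rpow_integral_Ioi_sub_le hα t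
  refine rpow_mul_rpow_one_sub_le (aboveThresholdProb_nonneg h₁.nonneg h₂.nonneg hp₂_one)
    (mul_nonneg hC₁ hC₂) ?_
  exact h₁.rpow_integral_mul_le hα hC₂ (fun z => (aboveThresholdCondProb_mem_Icc hF z).1)
    (fun z => (aboveThresholdCondProb_mem_Icc hF z).1)
    (integrable_aboveThresholdCondProb_mul hFm hF h₁.integrable)
    (rpow_aboveThresholdCondProb_sub_le hα hFm hF htail hs hk)

end AboveThreshold

section Laplace

variable {r c α : ℝ}

/-- Density of the centred Laplace distribution with rate `r`, the inverse of its scale. -/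
noncomputable def laplacePDFReal (r z : ℝ) : ℝ := r / 2 * exp (-(r * |z|))

/-- The integral of the Rényi integrand of order `α` of the Laplace density of rate `r` shifted by
`c`, as a function of `x = r * c`. The budget of the paper is the logarithm of
`laplaceRenyiMoment α ε₁ * laplaceRenyiMoment α (2 * ε₂)`, divided by `α - 1`. -/
noncomputable def laplaceRenyiMoment (α x : ℝ) : ℝ :=
  α / (2 * α - 1) * exp (x * (α - 1)) + (α - 1) / (2 * α - 1) * exp (-(x * α))

theorem laplacePDFReal_div (ε Δ z : ℝ) :
    laplacePDFReal (ε / Δ) z = ε / (2 * Δ) * exp (-(ε * |z|) / Δ) := by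
  unfold laplacePDFReal
  ring_nf

theorem laplacePDFReal_pos (hr : 0 < r) (z : ℝ) : 0 < laplacePDFReal r z := by
  unfold laplacePDFReal
  positivity

theorem shiftRenyiIntegrand_laplacePDFReal (hr : 0 < r) (α c z : ℝ) :
    shiftRenyiIntegrand α (laplacePDFReal r) c z =
      r / 2 * exp (-(r * (α * |z - c| + (1 - α) * |z|))) := by
  have hr₂ : 0 < r / 2 := by positivity
  rw [shiftRenyiIntegrand, laplacePDFReal, laplacePDFReal, mul_rpow hr₂.le (exp_pos _).le,
    mul_rpow hr₂.le (exp_pos _).le, mul_mul_mul_comm, ← rpow_add hr₂, ← exp_mul, ← exp_mul,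
    ← exp_add, add_sub_cancel, rpow_one]
  ring_nf

theorem shiftRenyiIntegrand_laplacePDFReal_eqOn_Iic (hr : 0 < r) (hc : 0 ≤ c) (α : ℝ) :
    Set.EqOn (shiftRenyiIntegrand α (laplacePDFReal r) c)
      (fun z => r / 2 * exp (-(r * c * α)) * exp (r * z)) (Set.Iic 0) := by
  intro z (hz : z ≤ 0)
  simp only
  rw [shiftRenyiIntegrand_laplacePDFReal hr, abs_of_nonpos hz, abs_of_nonpos (by linarith),
    mul_assoc, ← exp_add]
  ring_nf

theorem shiftRenyiIntegrand_laplacePDFReal_eqOn_Ioc (hr : 0 < r) (α c : ℝ) :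
    Set.EqOn (shiftRenyiIntegrand α (laplacePDFReal r) c)
      (fun z => r / 2 * exp (-(r * c * α)) * exp (r * (2 * α - 1) * z)) (Set.Ioc 0 c) := by
  intro z hz
  simp only
  rw [shiftRenyiIntegrand_laplacePDFReal hr, abs_of_pos hz.1,
    abs_of_nonpos (sub_nonpos.2 hz.2), mul_assoc, ← exp_add]
  ring_nf

theorem shiftRenyiIntegrand_laplacePDFReal_eqOn_Ioi (hr : 0 < r) (hc : 0 ≤ c) (α : ℝ) :
    Set.EqOn (shiftRenyiIntegrand α (laplacePDFReal r) c)
      (fun z => r / 2 * exp (r * c * α) * exp (-r * z)) (Set.Ioi c) := by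
  intro z (hz : c < z)
  simp only
  rw [shiftRenyiIntegrand_laplacePDFReal hr, abs_of_pos (hc.trans_lt hz),
    abs_of_pos (sub_pos.2 hz), mul_assoc, ← exp_add]
  ring_nf

theorem integrable_shiftRenyiIntegrand_laplacePDFReal (hr : 0 < r) (hc : 0 ≤ c) (α : ℝ) :
    Integrable (shiftRenyiIntegrand α (laplacePDFReal r) c) := by
  have hIic : IntegrableOn (shiftRenyiIntegrand α (laplacePDFReal r) c) (Set.Iic 0) :=
    IntegrableOn.congr_fun ((integrableOn_exp_mul_Iic hr 0).const_mul _)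
      (shiftRenyiIntegrand_laplacePDFReal_eqOn_Iic hr hc α).symm measurableSet_Iic
  have hIoc : IntegrableOn (shiftRenyiIntegrand α (laplacePDFReal r) c) (Set.Ioc 0 c) :=
    IntegrableOn.congr_fun (Continuous.integrableOn_Ioc (by fun_prop))
      (shiftRenyiIntegrand_laplacePDFReal_eqOn_Ioc hr α c).symm measurableSet_Ioc
  have hIoi : IntegrableOn (shiftRenyiIntegrand α (laplacePDFReal r) c) (Set.Ioi c) :=
    IntegrableOn.congr_fun ((integrableOn_exp_mul_Ioi (neg_lt_zero.2 hr) c).const_mul _)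
      (shiftRenyiIntegrand_laplacePDFReal_eqOn_Ioi hr hc α).symm measurableSet_Ioi
  rw [← integrableOn_univ, ← Set.Iic_union_Ioi (a := (0 : ℝ)), ← Set.Ioc_union_Ioi_eq_Ioi hc]
  exact hIic.union (hIoc.union hIoi)

theorem setIntegral_Iic_shiftRenyiIntegrand_laplacePDFReal (hr : 0 < r) (hc : 0 ≤ c) (α : ℝ) :
    ∫ z in Set.Iic 0, shiftRenyiIntegrand α (laplacePDFReal r) c z = exp (-(r * c * α)) / 2 := by
  rw [setIntegral_congr_fun measurableSet_Iic
    (shiftRenyiIntegrand_laplacePDFReal_eqOn_Iic hr hc α), integral_const_mul,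
    integral_exp_mul_Iic hr, mul_zero, exp_zero]
  field_simp

theorem setIntegral_Ioc_shiftRenyiIntegrand_laplacePDFReal (hr : 0 < r) (hc : 0 ≤ c)
    (hα : 2 * α - 1 ≠ 0) :
    ∫ z in Set.Ioc 0 c, shiftRenyiIntegrand α (laplacePDFReal r) c z =
      (exp (r * c * (α - 1)) - exp (-(r * c * α))) / (2 * (2 * α - 1)) := by
  have hexp : exp (r * c * (α - 1)) = exp (-(r * c * α)) * exp (r * (2 * α - 1) * c) := by
    rw [← exp_add]
    ring_nf
  rw [setIntegral_congr_fun measurableSet_Ioc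
    (shiftRenyiIntegrand_laplacePDFReal_eqOn_Ioc hr α c), integral_const_mul,
    ← intervalIntegral.integral_of_le hc,
    intervalIntegral.integral_comp_mul_left exp (mul_ne_zero hr.ne' hα), integral_exp, mul_zero,
    exp_zero, smul_eq_mul, hexp]
  field_simp

theorem setIntegral_Ioi_shiftRenyiIntegrand_laplacePDFReal (hr : 0 < r) (hc : 0 ≤ c) (α : ℝ) :
    ∫ z in Set.Ioi c, shiftRenyiIntegrand α (laplacePDFReal r) c z =
      exp (r * c * (α - 1)) / 2 := by
  have hexp : exp (r * c * (α - 1)) = exp (r * c * α) * exp (-r * c) := by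
    rw [← exp_add]
    ring_nf
  rw [setIntegral_congr_fun measurableSet_Ioi
    (shiftRenyiIntegrand_laplacePDFReal_eqOn_Ioi hr hc α), integral_const_mul,
    integral_exp_mul_Ioi (neg_lt_zero.2 hr), hexp]
  field_simp

theorem integral_shiftRenyiIntegrand_laplacePDFReal (hr : 0 < r) (hc : 0 ≤ c)
    (hα : 2 * α - 1 ≠ 0) :
    ∫ z, shiftRenyiIntegrand α (laplacePDFReal r) c z = laplaceRenyiMoment α (r * c) := by
  have hi := integrable_shiftRenyiIntegrand_laplacePDFReal hr hc α
  have hdisj : Disjoint (Set.Ioc 0 c) (Set.Ioi c) := Set.Ioc_disjoint_Ioi le_rfl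
  calc ∫ z, shiftRenyiIntegrand α (laplacePDFReal r) c z
      = (∫ z in Set.Iic 0, shiftRenyiIntegrand α (laplacePDFReal r) c z) +
          ((∫ z in Set.Ioc 0 c, shiftRenyiIntegrand α (laplacePDFReal r) c z) +
            ∫ z in Set.Ioi c, shiftRenyiIntegrand α (laplacePDFReal r) c z) := by
        rw [← setIntegral_union hdisj measurableSet_Ioi hi.integrableOn hi.integrableOn,
          Set.Ioc_union_Ioi_eq_Ioi hc,
          intervalIntegral.integral_Iic_add_Ioi hi.integrableOn hi.integrableOn]
    _ = exp (-(r * c * α)) / 2 +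
          ((exp (r * c * (α - 1)) - exp (-(r * c * α))) / (2 * (2 * α - 1)) +
            exp (r * c * (α - 1)) / 2) := by
        rw [setIntegral_Iic_shiftRenyiIntegrand_laplacePDFReal hr hc,
          setIntegral_Ioc_shiftRenyiIntegrand_laplacePDFReal hr hc hα,
          setIntegral_Ioi_shiftRenyiIntegrand_laplacePDFReal hr hc]
    _ = laplaceRenyiMoment α (r * c) := by
        unfold laplaceRenyiMoment
        generalize exp (-(r * c * α)) = x, exp (r * c * (α - 1)) = y
        field_simp
        ring

theorem integrable_laplacePDFReal (hr : 0 < r) : Integrable (laplacePDFReal r) := by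
  simpa only [shiftRenyiIntegrand_one_zero] using
    integrable_shiftRenyiIntegrand_laplacePDFReal hr le_rfl 1

theorem integral_laplacePDFReal (hr : 0 < r) : ∫ z, laplacePDFReal r z = 1 := by
  have h := integral_shiftRenyiIntegrand_laplacePDFReal (α := 1) hr le_rfl (by norm_num)
  rw [shiftRenyiIntegrand_one_zero] at h
  norm_num [h, laplaceRenyiMoment]

theorem hasFiniteShiftRenyi_laplacePDFReal (hr : 0 < r) (hc : 0 ≤ c) (α : ℝ) :
    HasFiniteShiftRenyi α (laplacePDFReal r) c where
  nonneg z := (laplacePDFReal_pos hr z).le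
  integrable := integrable_laplacePDFReal hr
  shift_eq_zero z hz := absurd hz (laplacePDFReal_pos hr z).ne'
  integrable_integrand := integrable_shiftRenyiIntegrand_laplacePDFReal hr hc α

end Laplace

theorem noisyBTLS_laplace_RDP_general {ι : Type*} {s : Finset ι} {k : ι} {a b : ι → ℝ}
    {Δ ε₁ ε₂ α : ℝ} (hΔ : 0 < Δ) (hε₁ : 0 < ε₁) (hε₂ : 0 < ε₂) (hα : 1 ≤ α)
    (hs : ∀ i ∈ s, b i ≤ a i + Δ) (hk : a k ≤ b k + Δ) :
    aboveThresholdProb (laplacePDFReal (ε₁ / Δ)) (laplacePDFReal (ε₂ / Δ)) s k a ^ α *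
        aboveThresholdProb (laplacePDFReal (ε₁ / Δ)) (laplacePDFReal (ε₂ / Δ)) s k b ^ (1 - α) ≤
      laplaceRenyiMoment α ε₁ * laplaceRenyiMoment α (2 * ε₂) := by
  have hr₁ : 0 < ε₁ / Δ := div_pos hε₁ hΔ
  have hr₂ : 0 < ε₂ / Δ := div_pos hε₂ hΔ
  have hΔ₂ : 0 ≤ 2 * Δ := by positivity
  have hα₂ : 2 * α - 1 ≠ 0 := by linarith
  have hx₁ : ε₁ / Δ * Δ = ε₁ := div_mul_cancel₀ ε₁ hΔ.ne'
  have hx₂ : ε₂ / Δ * (2 * Δ) = 2 * ε₂ := by field_simp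
  have key := aboveThresholdProb_rpow_mul_rpow_le hα
    (hasFiniteShiftRenyi_laplacePDFReal hr₁ hΔ.le α)
    (hasFiniteShiftRenyi_laplacePDFReal hr₂ hΔ₂ α) (integral_laplacePDFReal hr₂) hs hk
  rwa [integral_shiftRenyiIntegrand_laplacePDFReal hr₁ hΔ.le hα₂,
    integral_shiftRenyiIntegrand_laplacePDFReal hr₂ hΔ₂ hα₂, hx₁, hx₂] at key

/-- RDP bound for the Laplace version of Noisy Backtracking
Line Search, Theorem 2 of the paper. With threshold-noise density `p₁` Laplace
of scale `Δ/ε₁` and query-noise density `p₂` Laplace of scale `Δ/ε₂`, for query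
vectors `a, b` with `|a i − b i| ≤ Δ` coordinatewise and every output index `k`,
`P k a ^ α · P k b ^ (1−α)` is bounded by the product
`[α/(2α−1) e^{ε₁(α−1)} + (α−1)/(2α−1) e^{−ε₁α}] ·
 [α/(2α−1) e^{2ε₂(α−1)} + (α−1)/(2α−1) e^{−2ε₂α}]`
(i.e. `exp((α−1)·ε(α,ε₁,ε₂))` for the budget of Equation (4) of the paper). -/
theorem noisyBTLS_laplace_RDP
    (K : ℕ) (Δ ε₁ ε₂ α : ℝ) (hΔ : 0 < Δ) (hε₁ : 0 < ε₁) (hε₂ : 0 < ε₂) (hα : 1 < α)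
    (p₁ p₂ : ℝ → ℝ)
    (hp₁ : ∀ z : ℝ, p₁ z = ε₁ / (2 * Δ) * Real.exp (-(ε₁ * |z|) / Δ))
    (hp₂ : ∀ y : ℝ, p₂ y = ε₂ / (2 * Δ) * Real.exp (-(ε₂ * |y|) / Δ))
    (Φ₂ : ℝ → ℝ) (hΦ₂ : ∀ t : ℝ, Φ₂ t = ∫ u in Set.Iic t, p₂ u)
    (P : Fin K → (Fin K → ℝ) → ℝ)
    (hP : ∀ (k : Fin K) (a : Fin K → ℝ),
      P k a = ∫ z : ℝ,
        (∏ i ∈ Finset.univ.filter (fun i : Fin K => i < k), Φ₂ (z - a i)) *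
          (1 - Φ₂ (z - a k)) * p₁ z)
    (a b : Fin K → ℝ) (hab : ∀ i : Fin K, |a i - b i| ≤ Δ) :
    ∀ k : Fin K,
      P k a ^ α * P k b ^ (1 - α) ≤
        (α / (2 * α - 1) * Real.exp (ε₁ * (α - 1)) +
            (α - 1) / (2 * α - 1) * Real.exp (-(ε₁ * α))) *
          (α / (2 * α - 1) * Real.exp (2 * ε₂ * (α - 1)) +
            (α - 1) / (2 * α - 1) * Real.exp (-(2 * ε₂ * α))) := by
  intro k
  simpa only [aboveThresholdProb, aboveThresholdCondProb, cdfOfDensity, laplaceRenyiMoment,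
    laplacePDFReal_div, hP, hΦ₂, hp₁, hp₂] using
    noisyBTLS_laplace_RDP_general (s := Finset.univ.filter (· < k)) hΔ hε₁ hε₂ hα.le
      (fun i _ => by linarith [(abs_le.1 (hab i)).1]) (by linarith [(abs_le.1 (hab k)).2])
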